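/- arXiv:1604.08098 — 5 statements merged into one kernel-verified Lean document; each statement's English description precedes it below -/
import Mathlib

section
/- Let K ≥ 2, let p : Fin K → ℝ satisfy p_k ≥ 0 for all k and Σ_{k=1}^K p_k = 1, let q = max(1/2, max_{1≤k≤K} p_k), and assume q < 1. Let γ ≥ 1 be a real number and define acceptance probabilities a : Fin K → ℝ as follows: if γ ≥ 2q, set a_k = 2(1−q)/γ when p_k = q and a_k = 2q/γ otherwise; if 1 ≤ γ < 2q, set a_k = (1−q)/(γ−q) when p_k = q and a_k = 1 otherwise. Then S_w = Σ_{k=1}^K a_k p_k > 0, the matrix γ·S(a) − S_full is positive semidefinite, and Σ_{k=1}^K a_k p_k ≤ 1/γ. -/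
open Finset

/-- The index embedding from the first `K - 1` classes into all `K` classes. -/
def classEmb (K : ℕ) : Fin (K - 1) → Fin K := Fin.castLE (Nat.sub_le K 1)

/-- The subsampling information matrix `S(a)` with weights `w k = a k * p k`:
entries `δ_{ij} w_i - w_i w_j / S_w`. -/
noncomputable def subMat (K : ℕ) (w : Fin K → ℝ) : Matrix (Fin (K - 1)) (Fin (K - 1)) ℝ :=
  Matrix.of fun i j =>
    (if i = j then w (classEmb K i) else 0) -
      w (classEmb K i) * w (classEmb K j) / ∑ k, w k

/-- The full-data information matrix `S_full` with entries `δ_{ij} p_i - p_i p_j`. -/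
def fullMat (K : ℕ) (p : Fin K → ℝ) : Matrix (Fin (K - 1)) (Fin (K - 1)) ℝ :=
  Matrix.of fun i j =>
    (if i = j then p (classEmb K i) else 0) - p (classEmb K i) * p (classEmb K j)

/-!
The quadratic form of an information matrix with weights `w` is the weighted scatter
`∑ w_j (b_j - b̄)²` about the `w`-mean `b̄`. Singling out a class `k`, the law of total variance
splits it into the scatter of the remaining classes and the between-group term
`w_k W / (w_k + W) * (b_k - m)²`, where `W` and `m` are the mass and the mean of those classes.
Accepting class `k` at rate `h` and all others at a common rate `l` keeps `m` and scales the
remaining scatter by `l`. The rates are balanced, `γ h l = S_w`, which says precisely that the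
between-group terms of `γ S(a)` and `S_full` agree; their difference is then `γ l - 1 ≥ 0` times
the scatter of the remaining classes.

If `q > 1/2`, the class singled out is the only one with `p_k = q`. If `q = 1/2`, several classes
or none may satisfy `p_k = q`, but then `h = l` and any class will do.
-/

section WeightedScatter

variable {ι : Type*} {s : Finset ι} {k : ι} {w p a b : ι → ℝ} {c γ : ℝ}

/-- The scatter `∑ w_j (b_j - b̄)²` of `b` about its `w`-weighted mean `b̄` on `s`, that is, the
variance before division by the total weight; written in the form of König's formula. -/
noncomputable def weightedScatter (s : Finset ι) (w b : ι → ℝ) : ℝ :=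
  ∑ j ∈ s, w j * b j ^ 2 - (∑ j ∈ s, w j * b j) ^ 2 / ∑ j ∈ s, w j

lemma weightedScatter_nonneg (hw : ∀ j ∈ s, 0 ≤ w j) : 0 ≤ weightedScatter s w b := by
  have cauchySchwarz : (∑ j ∈ s, w j * b j) ^ 2 ≤ (∑ j ∈ s, w j * b j ^ 2) * ∑ j ∈ s, w j :=
    sum_sq_le_sum_mul_sum_of_sq_le_mul s (fun j hj => mul_nonneg (hw j hj) (sq_nonneg _)) hw
      fun j _ => le_of_eq (by ring)
  exact sub_nonneg.2 (div_le_of_le_mul₀ (sum_nonneg hw)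
    (sum_nonneg fun j hj => mul_nonneg (hw j hj) (sq_nonneg _)) cauchySchwarz)

lemma sum_mul_mul_of_forall_eq (ha : ∀ j ∈ s, a j = c) (f : ι → ℝ) :
    ∑ j ∈ s, (a * p) j * f j = c * ∑ j ∈ s, p j * f j := by
  rw [mul_sum]
  exact sum_congr rfl fun j hj => by rw [Pi.mul_apply, ha j hj, mul_assoc]

lemma sum_mul_of_forall_eq (ha : ∀ j ∈ s, a j = c) :
    ∑ j ∈ s, (a * p) j = c * ∑ j ∈ s, p j := by
  simpa only [mul_one] using sum_mul_mul_of_forall_eq (p := p) ha fun _ => 1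

lemma weightedScatter_mul_of_forall_eq (ha : ∀ j ∈ s, a j = c) :
    weightedScatter s (a * p) b = c * weightedScatter s p b := by
  rw [weightedScatter, sum_mul_mul_of_forall_eq ha fun j => b j ^ 2,
    sum_mul_mul_of_forall_eq ha, sum_mul_of_forall_eq ha, weightedScatter]
  rcases eq_or_ne c 0 with rfl | hc
  · simp only [zero_mul, zero_pow two_ne_zero, zero_div, sub_zero]
  · rw [mul_pow, sq c, mul_assoc, mul_div_mul_left _ _ hc, mul_div_assoc, mul_sub]

variable [DecidableEq ι]

lemma sum_mul_of_forall_ne_eq [Fintype ι] (ha : ∀ j ≠ k, a j = c) :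
    ∑ j, (a * p) j = a k * p k + c * ∑ j ∈ {k}ᶜ, p j := by
  rw [Fintype.sum_eq_add_sum_compl k, Pi.mul_apply,
    sum_mul_of_forall_eq fun j hj => ha j (by simpa only [mem_compl, mem_singleton] using hj)]

lemma weightedScatter_insert (hk : k ∉ s) (hs : ∑ j ∈ s, w j ≠ 0)
    (hks : w k + ∑ j ∈ s, w j ≠ 0) :
    weightedScatter (insert k s) w b = weightedScatter s w b +
      w k * (∑ j ∈ s, w j) / (w k + ∑ j ∈ s, w j) *
        (b k - (∑ j ∈ s, w j * b j) / ∑ j ∈ s, w j) ^ 2 := by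
  simp only [weightedScatter, sum_insert hk]
  field_simp
  ring

lemma mul_weightedScatter_insert_sub_of_balanced (hk : k ∉ s) (ha : ∀ j ∈ s, a j = c)
    (hc : c ≠ 0) (hs : ∑ j ∈ s, p j ≠ 0) (hks : a k * p k + c * ∑ j ∈ s, p j ≠ 0)
    (balanced : γ * (a k * c) * (p k + ∑ j ∈ s, p j) = a k * p k + c * ∑ j ∈ s, p j) :
    γ * weightedScatter (insert k s) (a * p) b - weightedScatter (insert k s) p b =
      (γ * c - 1) * weightedScatter s p b := by
  have total_ne : p k + ∑ j ∈ s, p j ≠ 0 := right_ne_zero_of_mul (balanced ▸ hks)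
  have between_eq : γ * (a k * p k * (c * ∑ j ∈ s, p j) / (a k * p k + c * ∑ j ∈ s, p j)) =
      p k * (∑ j ∈ s, p j) / (p k + ∑ j ∈ s, p j) := by
    rw [← mul_div_assoc, div_eq_div_iff hks total_ne, ← balanced]
    ring
  rw [weightedScatter_insert hk hs total_ne, weightedScatter_insert hk
      (by rw [sum_mul_of_forall_eq ha]; exact mul_ne_zero hc hs)
      (by rw [sum_mul_of_forall_eq ha]; exact hks),
    weightedScatter_mul_of_forall_eq ha, sum_mul_of_forall_eq ha, sum_mul_mul_of_forall_eq ha,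
    mul_div_mul_left _ _ hc, Pi.mul_apply, mul_add, ← mul_assoc γ (_ / _), between_eq]
  ring

end WeightedScatter

section InfoMatrix

open scoped Matrix

variable {ι : Type*} [Fintype ι] [DecidableEq ι]

/-- The information matrix `diag w - w wᵀ / ∑ w` of multinomial weights `w`, with no reference
class removed; `subMat` and `fullMat` are principal submatrices of it. -/
noncomputable def infoMatrix (w : ι → ℝ) : Matrix ι ι ℝ :=
  Matrix.diagonal w - (∑ j, w j)⁻¹ • Matrix.vecMulVec w w

lemma isHermitian_infoMatrix (w : ι → ℝ) : (infoMatrix w).IsHermitian :=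
  (Matrix.isHermitian_diagonal w).sub <| by
    rw [Matrix.IsHermitian, Matrix.conjTranspose_smul, Matrix.conjTranspose_vecMulVec]
    simp only [star_trivial]

lemma dotProduct_infoMatrix_mulVec (w b : ι → ℝ) :
    b ⬝ᵥ infoMatrix w *ᵥ b = weightedScatter univ w b := by
  have diagonal_part : b ⬝ᵥ Matrix.diagonal w *ᵥ b = ∑ j, w j * b j ^ 2 :=
    sum_congr rfl fun j _ => by rw [Matrix.mulVec_diagonal]; ring
  have rank_one_part : b ⬝ᵥ Matrix.vecMulVec w w *ᵥ b = (w ⬝ᵥ b) ^ 2 := by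
    rw [Matrix.vecMulVec_mulVec, op_smul_eq_smul, dotProduct_smul, dotProduct_comm b w,
      smul_eq_mul, sq]
  rw [infoMatrix, Matrix.sub_mulVec, Matrix.smul_mulVec, dotProduct_sub, dotProduct_smul,
    diagonal_part, rank_one_part, smul_eq_mul, inv_mul_eq_div, weightedScatter, dotProduct]

lemma posSemidef_smul_infoMatrix_sub_of_balanced {p a : ι → ℝ} {k : ι} {c γ : ℝ}
    (hp : ∀ j, 0 ≤ p j) (hrest : 0 < ∑ j ∈ {k}ᶜ, p j) (hak : 0 ≤ a k) (hc : 0 < c)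
    (ha : ∀ j ≠ k, a j = c) (hγc : 1 ≤ γ * c)
    (balanced : γ * (a k * c) * ∑ j, p j = ∑ j, (a * p) j) :
    (γ • infoMatrix (a * p) - infoMatrix p).PosSemidef := by
  have ha' : ∀ j ∈ ({k}ᶜ : Finset ι), a j = c := fun j hj => ha j (by simpa using hj)
  rw [Fintype.sum_eq_add_sum_compl k, sum_mul_of_forall_ne_eq ha] at balanced
  refine .of_dotProduct_mulVec_nonneg
    (((isHermitian_infoMatrix _).smul (.all γ)).sub (isHermitian_infoMatrix p)) fun b => ?_
  rw [star_trivial, Matrix.sub_mulVec, Matrix.smul_mulVec, dotProduct_sub, dotProduct_smul,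
    dotProduct_infoMatrix_mulVec, dotProduct_infoMatrix_mulVec, smul_eq_mul,
    ← insert_compl_self k, mul_weightedScatter_insert_sub_of_balanced (by simp) ha' hc.ne'
      hrest.ne' (by have := hp k; positivity) balanced]
  exact mul_nonneg (sub_nonneg.2 hγc) (weightedScatter_nonneg fun j _ => hp j)

lemma subMat_eq_submatrix (K : ℕ) (w : Fin K → ℝ) :
    subMat K w = (infoMatrix w).submatrix (classEmb K) (classEmb K) := by
  ext i j
  simp [subMat, infoMatrix, classEmb, Matrix.diagonal_apply, Matrix.vecMulVec_apply,
    inv_mul_eq_div]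

lemma fullMat_eq_subMat {K : ℕ} {p : Fin K → ℝ} (hp : ∑ k, p k = 1) :
    fullMat K p = subMat K p := by
  ext i j
  simp only [fullMat, subMat, hp, div_one]

end InfoMatrix

section Rates

variable {q γ : ℝ}

/-- The acceptance probability of the classes with `p_k = q`. -/
noncomputable def heavyRate (q γ : ℝ) : ℝ :=
  if 2 * q ≤ γ then 2 * (1 - q) / γ else (1 - q) / (γ - q)

/-- The acceptance probability of the classes with `p_k ≠ q`. -/
noncomputable def lightRate (q γ : ℝ) : ℝ :=
  if 2 * q ≤ γ then 2 * q / γ else 1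

lemma heavyRate_pos (hq : q < 1) (hγ : 1 ≤ γ) : 0 < heavyRate q γ := by
  have := sub_pos.2 hq
  have := sub_pos.2 (hq.trans_le hγ)
  unfold heavyRate
  split_ifs <;> positivity

lemma one_le_mul_lightRate (hq : 1 / 2 ≤ q) (hγ : 1 ≤ γ) : 1 ≤ γ * lightRate q γ := by
  unfold lightRate
  split_ifs
  · rw [mul_div_cancel₀ _ (by positivity)]
    linarith
  · rwa [mul_one]

lemma lightRate_pos (hq : 1 / 2 ≤ q) (hγ : 1 ≤ γ) : 0 < lightRate q γ :=
  pos_of_mul_pos_right (zero_lt_one.trans_le (one_le_mul_lightRate hq hγ)) (by linarith)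

lemma heavyRate_half_eq_lightRate_half (hγ : 1 ≤ γ) :
    heavyRate (1 / 2) γ = lightRate (1 / 2) γ := by
  rw [heavyRate, lightRate, if_pos (by linarith), if_pos (by linarith)]
  norm_num

lemma mul_heavyRate_mul_lightRate (hq : q < 1) (hγ : 1 ≤ γ) :
    γ * (heavyRate q γ * lightRate q γ) = heavyRate q γ * q + lightRate q γ * (1 - q) := by
  have : γ - q ≠ 0 := (sub_pos.2 (hq.trans_le hγ)).ne'
  unfold heavyRate lightRate
  split_ifs <;> field_simp <;> ring

lemma mul_heavyRate_mul_lightRate_le (hq : 1 / 2 ≤ q) (hq1 : q < 1) (hγ : 1 ≤ γ) :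
    γ * (heavyRate q γ * lightRate q γ) ≤ 1 / γ := by
  have hγ0 : 0 < γ := by linarith
  rw [le_div_iff₀ hγ0]
  unfold heavyRate lightRate
  split_ifs with h
  · calc γ * (2 * (1 - q) / γ * (2 * q / γ)) * γ = 1 - (2 * q - 1) ^ 2 := by field_simp; ring
      _ ≤ 1 := sub_le_self _ (sq_nonneg _)
  · have mul_le_q : (1 - q) * γ ≤ q := by
      calc (1 - q) * γ ≤ 1 / 2 * γ := by gcongr; linarith
        _ ≤ q := by linarith
    have : (1 - q) * γ ^ 2 ≤ γ - q := by
      rw [← sub_nonneg]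
      calc 0 ≤ (γ - 1) * (q - (1 - q) * γ) := mul_nonneg (sub_nonneg.2 hγ) (sub_nonneg.2 mul_le_q)
        _ = γ - q - (1 - q) * γ ^ 2 := by ring
    calc γ * ((1 - q) / (γ - q) * 1) * γ = (1 - q) * γ ^ 2 / (γ - q) := by ring
      _ ≤ 1 := div_le_one_of_le₀ this (by linarith)

end Rates

section SingledOutClass

variable {ι : Type*} [Fintype ι] {p : ι → ℝ}

lemma eq_of_half_lt (hp0 : ∀ j, 0 ≤ p j) (hp1 : ∑ j, p j ≤ 1) {i j : ι}
    (hi : 1 / 2 < p i) (hj : 1 / 2 < p j) : i = j := by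
  classical
  by_contra hij
  have : p i + p j ≤ 1 := by
    rw [← sum_pair hij]
    exact (sum_le_univ_sum_of_nonneg hp0).trans hp1
  linarith

lemma exists_forall_eq_iff_of_half_lt [Nonempty ι] (hp0 : ∀ j, 0 ≤ p j) (hp1 : ∑ j, p j ≤ 1)
    {q : ℝ} (hq : q = max (1 / 2) (⨆ j, p j)) (hlt : 1 / 2 < q) :
    ∃ k, ∀ j, p j = q ↔ j = k := by
  obtain ⟨k, hk⟩ := exists_eq_ciSup_of_finite (f := p)
  have hkq : p k = q := by
    rw [hk, hq, max_eq_right ((lt_max_iff.1 (hq ▸ hlt)).resolve_left (lt_irrefl _)).le]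
  exact ⟨k, fun j => ⟨fun hj => eq_of_half_lt hp0 hp1 (hj ▸ hlt) (hkq ▸ hlt),
    fun hj => hj ▸ hkq⟩⟩

lemma exists_eq_heavyRate_forall_ne_eq_lightRate [Nonempty ι] (hp0 : ∀ j, 0 ≤ p j)
    (hp1 : ∑ j, p j = 1) {q γ : ℝ} (hq : q = max (1 / 2) (⨆ j, p j)) (hγ : 1 ≤ γ) {a : ι → ℝ}
    (ha : ∀ j, a j = if p j = q then heavyRate q γ else lightRate q γ) :
    ∃ k, a k = heavyRate q γ ∧ (∀ j ≠ k, a j = lightRate q γ) ∧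
      ∑ j, (a * p) j = heavyRate q γ * q + lightRate q γ * (1 - q) := by
  classical
  have sum_eq_of_rates (k : ι) (hk : ∀ j ≠ k, a j = lightRate q γ) :
      ∑ j, (a * p) j = a k * p k + lightRate q γ * (1 - p k) := by
    rw [sum_mul_of_forall_ne_eq hk, ← hp1, Fintype.sum_eq_add_sum_compl k p, add_sub_cancel_left]
  rcases (hq ▸ le_max_left _ _ : 1 / 2 ≤ q).eq_or_lt with rfl | hlt
  · have rates_eq := heavyRate_half_eq_lightRate_half hγ
    have ha' (j : ι) : a j = lightRate (1 / 2) γ := by rw [ha, rates_eq, ite_self]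
    obtain ⟨k⟩ := ‹Nonempty ι›
    refine ⟨k, by rw [ha', rates_eq], fun j _ => ha' j, ?_⟩
    rw [sum_eq_of_rates k fun j _ => ha' j, ha', rates_eq]
    ring
  · obtain ⟨k, hk⟩ := exists_forall_eq_iff_of_half_lt hp0 hp1.le hq hlt
    have hpk : p k = q := (hk k).2 rfl
    have hak : a k = heavyRate q γ := by rw [ha, if_pos hpk]
    have ha' : ∀ j ≠ k, a j = lightRate q γ := fun j hj => by rw [ha, if_neg (mt (hk j).1 hj)]
    exact ⟨k, hak, ha', by rw [sum_eq_of_rates k ha', hak, hpk]⟩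

end SingledOutClass

theorem lus_sampling_strategy
    (K : ℕ) (hK : 2 ≤ K) (p : Fin K → ℝ)
    (hp0 : ∀ k, 0 ≤ p k) (hp1 : ∑ k, p k = 1)
    (q : ℝ) (hq : q = max (1 / 2) (⨆ k, p k)) (hq1 : q < 1)
    (γ : ℝ) (hγ : 1 ≤ γ) (a : Fin K → ℝ)
    (ha₁ : 2 * q ≤ γ → ∀ k, a k = if p k = q then 2 * (1 - q) / γ else 2 * q / γ)
    (ha₂ : γ < 2 * q → ∀ k, a k = if p k = q then (1 - q) / (γ - q) else 1) :
    0 < ∑ k, a k * p k ∧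
    (γ • subMat K (fun k => a k * p k) - fullMat K p).PosSemidef ∧
    ∑ k, a k * p k ≤ 1 / γ := by
  have : Nonempty (Fin K) := ⟨⟨0, by omega⟩⟩
  have half_le : 1 / 2 ≤ q := hq ▸ le_max_left _ _
  have ha (k) : a k = if p k = q then heavyRate q γ else lightRate q γ := by
    rcases le_or_gt (2 * q) γ with h | h
    · rw [ha₁ h, heavyRate, lightRate, if_pos h, if_pos h]
    · rw [ha₂ h, heavyRate, lightRate, if_neg h.not_ge, if_neg h.not_ge]
  obtain ⟨k, hak, ha', hsum⟩ := exists_eq_heavyRate_forall_ne_eq_lightRate hp0 hp1 hq hγ ha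
  rw [← mul_heavyRate_mul_lightRate hq1 hγ] at hsum
  have hpk : p k < 1 := ((le_ciSup (Set.finite_range p).bddAbove k).trans
    (hq ▸ le_max_right _ _)).trans_lt hq1
  have hrest : 0 < ∑ j ∈ {k}ᶜ, p j := by
    rw [Fintype.sum_eq_add_sum_compl k] at hp1
    linarith
  have heavy_pos := heavyRate_pos hq1 hγ
  have light_pos := lightRate_pos half_le hγ
  refine ⟨hsum ▸ by positivity, ?_, hsum ▸ mul_heavyRate_mul_lightRate_le half_le hq1 hγ⟩
  rw [fullMat_eq_subMat hp1, subMat_eq_submatrix, subMat_eq_submatrix]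
  exact (posSemidef_smul_infoMatrix_sub_of_balanced hp0 hrest (hak ▸ heavy_pos.le) light_pos ha'
    (one_le_mul_lightRate half_le hγ) (by rw [hp1, mul_one, hak, hsum])).submatrix _
end

section
/- Let K ≥ 2, let p : Fin K → ℝ satisfy p_k ≥ 0 for all k and Σ_{k=1}^K p_k = 1, let q = max(1/2, max_{1≤k≤K} p_k), and assume q < 1. Let γ be a real number with 1 ≤ γ < 2q, and define a : Fin K → ℝ by a_k = (1−q)/(γ−q) if p_k = q and a_k = 1 otherwise. Then S_w = Σ_{k=1}^K a_k p_k > 0 and the (K−1)×(K−1) matrix γ·S(a) − S_full is positive semidefinite. -/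
open Finset

/-!
When `1 ≤ γ < 2 * q`, the value `q` exceeds `1 / 2`, so it is the probability of a single class `m`.
On the row and column of `m` the matrices `γ • S(a)` and `S_full` agree, and on the remaining
classes their difference is `γ - 1` times the information matrix of `p` with class `m` removed.
That matrix is positive semidefinite by the Cauchy–Schwarz inequality.
-/

open Matrix

section Information

variable {ι F : Type*} [DecidableEq ι] [Field F]

section Acceptance

variable {p : ι → F} {γ : F} {m : ι}

/-- The acceptance probabilities of local uncertainty sampling: class `m` is kept with probability
`(1 - p m) / (γ - p m)`, every other class always. -/
def lusAcceptance (p : ι → F) (γ : F) (m : ι) : ι → F :=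
  Function.update 1 m ((1 - p m) / (γ - p m))

lemma lusAcceptance_self : lusAcceptance p γ m m = (1 - p m) / (γ - p m) :=
  Function.update_self ..

lemma lusAcceptance_of_ne {k : ι} (hk : k ≠ m) : lusAcceptance p γ m k = 1 :=
  Function.update_of_ne hk ..

lemma sum_lusAcceptance_mul [Fintype ι] (hp1 : ∑ k, p k = 1) (hγ : γ ≠ p m) :
    ∑ k, lusAcceptance p γ m k * p k = γ * (1 - p m) / (γ - p m) := by
  have hγ' : γ - p m ≠ 0 := sub_ne_zero.mpr hγ
  have hrest : ∑ k ∈ univ.erase m, lusAcceptance p γ m k * p k = 1 - p m := by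
    rw [← hp1, ← sum_erase_eq_sub (mem_univ m)]
    exact sum_congr rfl fun k hk => by rw [lusAcceptance_of_ne (ne_of_mem_erase hk), one_mul]
  rw [← add_sum_erase _ _ (mem_univ m), hrest, lusAcceptance_self]
  field_simp
  ring

end Acceptance

variable [Fintype ι]

/-- The information matrix `diag w - w wᵀ / ∑ w` of a multinomial model with class weights `w`,
which need not be normalized (if `∑ w = 0` the rank-one term is `0`). It is indexed by all classes;
`subMat` and `fullMat` are principal submatrices of it. -/
def multinomialInfo (w : ι → F) : Matrix ι ι F :=
  diagonal w - (∑ k, w k)⁻¹ • vecMulVec w w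

lemma multinomialInfo_apply (w : ι → F) (i j : ι) :
    multinomialInfo w i j = (if i = j then w i else 0) - w i * w j / ∑ k, w k := by
  rw [multinomialInfo, Matrix.sub_apply, Matrix.smul_apply, diagonal_apply, vecMulVec_apply,
    smul_eq_mul, inv_mul_eq_div]

lemma isSymm_multinomialInfo (w : ι → F) : (multinomialInfo w).IsSymm :=
  (isSymm_diagonal w).sub (IsSymm.smul (transpose_vecMulVec w w) _)

theorem smul_multinomialInfo_lusAcceptance_sub {p : ι → F} {γ : F} {m : ι}
    (hp1 : ∑ k, p k = 1) (hpm : p m ≠ 1) (hγ0 : γ ≠ 0) (hγ : γ ≠ p m) :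
    γ • multinomialInfo (fun k => lusAcceptance p γ m k * p k) - multinomialInfo p =
      (γ - 1) • multinomialInfo (Function.update p m 0) := by
  have hγ' : γ - p m ≠ 0 := sub_ne_zero.mpr hγ
  have hpm' : 1 - p m ≠ 0 := sub_ne_zero.mpr hpm.symm
  have hrest : ∑ k, Function.update p m 0 k = 1 - p m := by
    rw [sum_update_of_mem (mem_univ m), zero_add, sdiff_singleton_eq_erase,
      sum_erase_eq_sub (mem_univ m), hp1]
  ext i j
  simp only [Matrix.sub_apply, Matrix.smul_apply, multinomialInfo_apply, smul_eq_mul, hp1, hrest,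
    sum_lusAcceptance_mul hp1 hγ]
  by_cases hi : i = m <;> by_cases hj : j = m
  · subst hi hj
    simp only [lusAcceptance_self, Function.update_self, if_true]
    field_simp
    ring
  · subst hi
    simp only [lusAcceptance_self, lusAcceptance_of_ne hj, Function.update_self, Ne.symm hj,
      if_false]
    field_simp
    ring
  · subst hj
    simp only [lusAcceptance_self, lusAcceptance_of_ne hi, Function.update_self, hi, if_false]
    field_simp
    ring
  · simp only [lusAcceptance_of_ne hi, lusAcceptance_of_ne hj, Function.update_of_ne hi,
      Function.update_of_ne hj]
    split_ifs <;> field_simp <;> ring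

lemma dotProduct_multinomialInfo_mulVec (w x : ι → F) :
    x ⬝ᵥ (multinomialInfo w *ᵥ x) =
      ∑ k, w k * x k ^ 2 - (∑ k, w k * x k) ^ 2 / ∑ k, w k := by
  have hdiag : x ⬝ᵥ (diagonal w *ᵥ x) = ∑ k, w k * x k ^ 2 :=
    sum_congr rfl fun k _ => by rw [mulVec_diagonal]; ring
  rw [multinomialInfo, sub_mulVec, smul_mulVec, vecMulVec_mulVec, dotProduct_sub, hdiag,
    dotProduct_smul, dotProduct_smul, dotProduct_comm x w]
  simp only [dotProduct, MulOpposite.smul_eq_mul_unop, MulOpposite.unop_op, smul_eq_mul]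
  ring

theorem multinomialInfo_posSemidef {w : ι → ℝ} (hw : ∀ k, 0 ≤ w k) :
    (multinomialInfo w).PosSemidef := by
  refine .of_dotProduct_mulVec_nonneg
    (isHermitian_iff_isSymm.mpr (isSymm_multinomialInfo w)) fun x => ?_
  rw [star_trivial, dotProduct_multinomialInfo_mulVec, sub_nonneg]
  have hwx : ∀ k, 0 ≤ w k * x k ^ 2 := fun k => mul_nonneg (hw k) (sq_nonneg _)
  have cauchy_schwarz : (∑ k, w k * x k) ^ 2 ≤ (∑ k, w k * x k ^ 2) * ∑ k, w k :=
    sum_sq_le_sum_mul_sum_of_sq_le_mul _ (fun k _ => hwx k) (fun k _ => hw k)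
      fun k _ => le_of_eq (by ring)
  exact div_le_of_le_mul₀ (sum_nonneg fun k _ => hw k) (sum_nonneg fun k _ => hwx k)
    cauchy_schwarz

end Information

lemma existsUnique_eq_iSup_of_sum_lt_two_mul_iSup {ι : Type*} [Fintype ι] {p : ι → ℝ}
    (hp0 : ∀ k, 0 ≤ p k) (h : ∑ k, p k < 2 * ⨆ k, p k) : ∃! m, p m = ⨆ k, p k := by
  cases isEmpty_or_nonempty ι
  · simp at h
  obtain ⟨m, hm⟩ := exists_eq_ciSup_of_finite (f := p)
  refine ⟨m, hm, fun k hk => by_contra fun hkm => ?_⟩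
  have := add_le_sum (fun i _ => hp0 i) (mem_univ k) (mem_univ m) hkm
  linarith

lemma smul_subMat_sub_fullMat {K : ℕ} {p : Fin K → ℝ} (hp1 : ∑ k, p k = 1) (γ : ℝ)
    (w : Fin K → ℝ) :
    γ • subMat K w - fullMat K p =
      (γ • multinomialInfo w - multinomialInfo p).submatrix (classEmb K) (classEmb K) := by
  have hinj : Function.Injective (classEmb K) := Fin.castLE_injective _
  ext i j
  simp only [subMat, fullMat, Matrix.sub_apply, Matrix.smul_apply, of_apply, submatrix_apply,
    multinomialInfo_apply, hinj.eq_iff, hp1, div_one]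

theorem lus_psd_small_gamma_general {ι : Type*} [Fintype ι] [DecidableEq ι] {p : ι → ℝ}
    (hp0 : ∀ k, 0 ≤ p k) (hp1 : ∑ k, p k = 1) {m : ι} (hpm : p m < 1) {γ : ℝ} (hγ : 1 ≤ γ) :
    0 < ∑ k, lusAcceptance p γ m k * p k ∧
    (γ • multinomialInfo (fun k => lusAcceptance p γ m k * p k) -
      multinomialInfo p).PosSemidef := by
  have hγ0 : 0 < γ := one_pos.trans_le hγ
  have hγpm : p m < γ := hpm.trans_le hγ
  constructor
  · rw [sum_lusAcceptance_mul hp1 hγpm.ne']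
    exact div_pos (mul_pos hγ0 (sub_pos.mpr hpm)) (sub_pos.mpr hγpm)
  · rw [smul_multinomialInfo_lusAcceptance_sub hp1 hpm.ne hγ0.ne' hγpm.ne']
    have hrest : ∀ k, 0 ≤ Function.update p m 0 k :=
      le_update_iff.mpr ⟨le_rfl, fun k _ => hp0 k⟩
    exact (multinomialInfo_posSemidef hrest).smul (sub_nonneg.mpr hγ)

theorem lus_psd_small_gamma
    (K : ℕ) (hK : 2 ≤ K) (p : Fin K → ℝ)
    (hp0 : ∀ k, 0 ≤ p k) (hp1 : ∑ k, p k = 1)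
    (q : ℝ) (hq : q = max (1 / 2) (⨆ k, p k)) (hq1 : q < 1)
    (γ : ℝ) (hγ1 : 1 ≤ γ) (hγ2 : γ < 2 * q) (a : Fin K → ℝ)
    (ha : ∀ k, a k = if p k = q then (1 - q) / (γ - q) else 1) :
    0 < ∑ k, a k * p k ∧
    (γ • subMat K (fun k => a k * p k) - fullMat K p).PosSemidef := by
  have hq_sup : q = ⨆ k, p k := by
    rcases max_choice (1 / 2) (⨆ k, p k) with h | h <;> linarith
  obtain ⟨m, hm, hm_unique⟩ :=
    existsUnique_eq_iSup_of_sum_lt_two_mul_iSup hp0 (by linarith)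
  obtain rfl : p m = q := hm.trans hq_sup.symm
  obtain rfl : a = lusAcceptance p γ m := by
    funext k
    rw [ha]
    split_ifs with hk
    · rw [hm_unique k (hk.trans hq_sup), lusAcceptance_self]
    · rw [lusAcceptance_of_ne (ne_of_apply_ne p hk)]
  rw [smul_subMat_sub_fullMat hp1]
  exact (lus_psd_small_gamma_general hp0 hp1 hq1 hγ1).imp_right fun h => h.submatrix _
end

section
/- Let K ≥ 2, let p : Fin K → ℝ satisfy p_k ≥ 0 for all k and Σ_{k=1}^K p_k = 1, and let q = max(1/2, max_{1≤k≤K} p_k). Let γ be a real number with γ ≥ 2q, and define a : Fin K → ℝ by a_k = 2(1−q)/γ if p_k = q and a_k = 2q/γ otherwise. Then the expected acceptance probability satisfies Σ_{k=1}^K a_k p_k = 4q(1−q)/γ, and in particular Σ_{k=1}^K a_k p_k ≤ 1/γ. -/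
open Finset

/-!
If `m` is the total mass of the classes whose probability equals `q`, the expected acceptance
probability is `2 / γ * ((1 - q) * m + q * (1 - m))`, and the second factor exceeds
`2 * q * (1 - q)` by `(1 - 2 * q) * (m - q)`. This excess vanishes: if `q > 1 / 2`, exactly one
class attains `q`, so `m = q`; if `q = 1 / 2`, the value of `m` is irrelevant.
-/

theorem filter_apply_eq_singleton_of_sum_lt {ι M : Type*} [AddCommMonoid M] [PartialOrder M]
    [IsOrderedAddMonoid M] [DecidableEq M] {s : Finset ι} {f : ι → M} {i : ι}
    (hf : ∀ j ∈ s, 0 ≤ f j) (hi : i ∈ s) (hlt : ∑ j ∈ s, f j < f i + f i) :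
    {j ∈ s | f j = f i} = {i} := by
  refine eq_singleton_iff_unique_mem.mpr ⟨mem_filter.mpr ⟨hi, rfl⟩, fun j hj ↦ ?_⟩
  obtain ⟨hjs, hji⟩ := mem_filter.mp hj
  by_contra hne
  have hle : f j + f i ≤ ∑ k ∈ s, f k := add_le_sum hf hjs hi hne
  exact (hji ▸ hle).not_gt hlt

theorem exists_eq_of_eq_max_iSup_of_lt {ι α : Type*} [Finite ι] [Nonempty ι]
    [ConditionallyCompleteLinearOrder α] {f : ι → α} {c q : α} (hq : q = max c (⨆ i, f i))
    (hlt : c < q) : ∃ i, f i = q := by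
  obtain ⟨i, hi⟩ := exists_eq_ciSup_of_finite (f := f)
  have hc : c < ⨆ i, f i := (lt_max_iff.mp (hq ▸ hlt)).resolve_left (lt_irrefl c)
  exact ⟨i, by rw [hi, hq, max_eq_right hc.le]⟩

theorem sum_ite_mul_eq_mul_sum_filter {ι R : Type*} [NonUnitalNonAssocRing R] (s : Finset ι)
    (P : ι → Prop) [DecidablePred P] (f : ι → R) (x y : R) :
    ∑ i ∈ s, (if P i then x else y) * f i =
      x * ∑ i ∈ s with P i, f i + y * (∑ i ∈ s, f i - ∑ i ∈ s with P i, f i) := by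
  rw [← sum_filter_add_sum_filter_not s P f, add_sub_cancel_left]
  simp only [ite_mul, sum_ite, mul_sum]

theorem sum_ite_mul_eq_two_mul_mul_one_sub {ι 𝕜 : Type*} [Field 𝕜] [LinearOrder 𝕜]
    [IsStrictOrderedRing 𝕜] {s : Finset ι} {p : ι → 𝕜} {q : 𝕜} (hp0 : ∀ i ∈ s, 0 ≤ p i)
    (hp1 : ∑ i ∈ s, p i = 1) (hq : 1 / 2 ≤ q) (hmem : 1 / 2 < q → ∃ i ∈ s, p i = q) :
    ∑ i ∈ s, (if p i = q then 1 - q else q) * p i = 2 * q * (1 - q) := by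
  have hmass : (1 - 2 * q) * (∑ i ∈ s with p i = q, p i - q) = 0 := by
    rcases hq.eq_or_lt with rfl | hhalf
    · rw [mul_one_div_cancel two_ne_zero, sub_self, zero_mul]
    · obtain ⟨i, hi, rfl⟩ := hmem hhalf
      have hlt : ∑ j ∈ s, p j < p i + p i := by linarith
      rw [filter_apply_eq_singleton_of_sum_lt hp0 hi hlt, sum_singleton, sub_self, mul_zero]
  rw [sum_ite_mul_eq_mul_sum_filter, hp1]
  linear_combination hmass

theorem lus_expected_sample_size_large_gamma_general {ι : Type*} [Fintype ι] {p : ι → ℝ}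
    (hp0 : ∀ k, 0 ≤ p k) (hp1 : ∑ k, p k = 1) {q : ℝ} (hq : q = max (1 / 2) (⨆ k, p k))
    {γ : ℝ} (hγ : 0 < γ) {a : ι → ℝ}
    (ha : ∀ k, a k = if p k = q then 2 * (1 - q) / γ else 2 * q / γ) :
    ∑ k, a k * p k = 4 * q * (1 - q) / γ ∧ ∑ k, a k * p k ≤ 1 / γ := by
  have : Nonempty ι := univ_nonempty_iff.mp (nonempty_of_sum_ne_zero (hp1 ▸ one_ne_zero))
  have hmem (hhalf : 1 / 2 < q) : ∃ k ∈ univ, p k = q := by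
    simpa only [mem_univ, true_and] using exists_eq_of_eq_max_iSup_of_lt hq hhalf
  have hweight : ∑ k, (if p k = q then 1 - q else q) * p k = 2 * q * (1 - q) :=
    sum_ite_mul_eq_two_mul_mul_one_sub (fun k _ ↦ hp0 k) hp1 (hq ▸ le_max_left _ _) hmem
  have ha_scaled (k : ι) : a k = 2 / γ * if p k = q then 1 - q else q := by
    rw [ha, mul_ite, div_mul_eq_mul_div, div_mul_eq_mul_div]
  have hsum : ∑ k, a k * p k = 4 * q * (1 - q) / γ := by
    simp only [ha_scaled, mul_assoc (2 / γ), ← mul_sum, hweight]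
    ring
  have hle : 4 * q * (1 - q) ≤ 1 := by linarith [four_mul_le_sq_add q (1 - q)]
  exact ⟨hsum, hsum.trans_le (div_le_div_of_nonneg_right hle hγ.le)⟩

theorem lus_expected_sample_size_large_gamma
    (K : ℕ) (hK : 2 ≤ K) (p : Fin K → ℝ)
    (hp0 : ∀ k, 0 ≤ p k) (hp1 : ∑ k, p k = 1)
    (q : ℝ) (hq : q = max (1 / 2) (⨆ k, p k))
    (γ : ℝ) (hγ : 2 * q ≤ γ) (a : Fin K → ℝ)
    (ha : ∀ k, a k = if p k = q then 2 * (1 - q) / γ else 2 * q / γ) :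
    ∑ k, a k * p k = 4 * q * (1 - q) / γ ∧ ∑ k, a k * p k ≤ 1 / γ := by
  have hhalf : 1 / 2 ≤ q := hq ▸ le_max_left _ _
  exact lus_expected_sample_size_large_gamma_general hp0 hp1 hq (by linarith) ha
end

section
/- Let K ≥ 2, let p : Fin K → ℝ satisfy p_k ≥ 0 for all k and Σ_{k=1}^K p_k = 1, let q = max(1/2, max_{1≤k≤K} p_k), and assume q < 1. Let γ be a real number with 1 ≤ γ < 2q, and define a : Fin K → ℝ by a_k = (1−q)/(γ−q) if p_k = q and a_k = 1 otherwise. Then the expected acceptance probability satisfies Σ_{k=1}^K a_k p_k = γ(1−q)/(γ−q), and moreover γ(1−q)/(γ−q) ≤ 1/γ, so Σ_{k=1}^K a_k p_k ≤ 1/γ. -/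
open Finset

/-!
If `q > 1/2`, exactly one class has probability `q`, since two would exceed the total mass `1`.
So rejection acts on mass `q` and the expected acceptance is `1 - (γ - 1) / (γ - q) * q`. If
`γ = 1`, nothing is rejected; this covers `q = 1/2`, where several classes may have probability
`q` or none. The bound by `1 / γ` is the factorisation
`(γ - q) - γ² (1 - q) = (γ - 1) (q - γ (1 - q))`.
-/

section StrictMajority

variable {ι M : Type*} [AddCommMonoid M] [PartialOrder M] [IsOrderedCancelAddMonoid M]
  {s : Finset ι} {f : ι → M} {j : ι}

theorem lt_of_sum_lt_add_self (hf : ∀ i ∈ s, 0 ≤ f i) (hj : j ∈ s)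
    (hmajority : ∑ i ∈ s, f i < f j + f j) {k : ι} (hk : k ∈ s) (hkj : k ≠ j) : f k < f j :=
  lt_of_add_lt_add_right ((add_le_sum hf hk hj hkj).trans_lt hmajority)

theorem filter_eq_singleton_of_sum_lt_add_self [DecidableEq M] (hf : ∀ i ∈ s, 0 ≤ f i)
    (hj : j ∈ s) (hmajority : ∑ i ∈ s, f i < f j + f j) : {k ∈ s | f k = f j} = {j} := by
  refine eq_singleton_iff_unique_mem.2 ⟨mem_filter.2 ⟨hj, rfl⟩, fun k hk => ?_⟩
  obtain ⟨hks, hkj⟩ := mem_filter.1 hk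
  by_contra hne
  exact (lt_of_sum_lt_add_self hf hj hmajority hks hne).ne hkj

end StrictMajority

theorem exists_eq_max_ciSup_of_lt {ι α : Type*} [Finite ι] [Nonempty ι]
    [ConditionallyCompleteLinearOrder α] (f : ι → α) {c : α} (hc : c < max c (⨆ i, f i)) :
    ∃ j, f j = max c (⨆ i, f i) := by
  obtain ⟨j, hj⟩ := exists_eq_ciSup_of_finite (f := f)
  have hlt : c < ⨆ i, f i := (lt_max_iff.1 hc).resolve_left (lt_irrefl c)
  exact ⟨j, by rw [hj, max_eq_right hlt.le]⟩

theorem sum_filter_eq_of_half_lt {ι : Type*} [Fintype ι] {p : ι → ℝ} (hp0 : ∀ k, 0 ≤ p k)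
    (hp1 : ∑ k, p k = 1) {q : ℝ} (hq : q = max (1 / 2) (⨆ k, p k)) (hhalf : 1 / 2 < q) :
    ∑ k with p k = q, p k = q := by
  have : Nonempty ι := not_isEmpty_iff.1 fun _ => by simp at hp1
  obtain ⟨j, hj⟩ := exists_eq_max_ciSup_of_lt p (hq ▸ hhalf)
  obtain rfl : p j = q := hj.trans hq.symm
  rw [filter_eq_singleton_of_sum_lt_add_self (fun k _ => hp0 k) (mem_univ j) (by linarith),
    sum_singleton]

theorem sum_ite_one_mul {ι R : Type*} [NonAssocRing R] (s : Finset ι) (P : ι → Prop)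
    [DecidablePred P] (c : R) (f : ι → R) :
    ∑ i ∈ s, (if P i then c else 1) * f i = ∑ i ∈ s, f i - (1 - c) * ∑ i ∈ s with P i, f i := by
  rw [sum_filter, mul_sum, ← sum_sub_distrib]
  refine sum_congr rfl fun i _ => ?_
  split_ifs <;> simp [sub_mul]

section Field

variable {𝕜 : Type*} [Field 𝕜] {q γ : 𝕜}

theorem one_sub_one_sub_div_mul (hqγ : γ - q ≠ 0) :
    1 - (1 - (1 - q) / (γ - q)) * q = γ * (1 - q) / (γ - q) := by
  field_simp
  ring

variable [LinearOrder 𝕜] [IsStrictOrderedRing 𝕜]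

theorem half_lt_of_mul_one_sub_le (hγ : 1 < γ) (hγq : γ * (1 - q) ≤ q) : 1 / 2 < q := by
  by_contra! hq
  have hlt : 1 - q < γ * (1 - q) := lt_mul_of_one_lt_left (by linarith) hγ
  linarith

theorem mul_one_sub_le_of_le_two_mul (hq : 1 / 2 ≤ q) (hq1 : q ≤ 1) (hγ : γ ≤ 2 * q) :
    γ * (1 - q) ≤ q :=
  calc
    γ * (1 - q) ≤ 2 * q * (1 - q) := mul_le_mul_of_nonneg_right hγ (sub_nonneg.2 hq1)
    _ = q * (2 * (1 - q)) := by ring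
    _ ≤ q := mul_le_of_le_one_right (by linarith) (by linarith)

theorem mul_one_sub_div_sub_le_one_div (hγ : 1 ≤ γ)
    (hqγ : q < γ) (hγq : γ * (1 - q) ≤ q) : γ * (1 - q) / (γ - q) ≤ 1 / γ := by
  rw [div_le_div_iff₀ (sub_pos.2 hqγ) (zero_lt_one.trans_le hγ)]
  have hfactor : 0 ≤ (γ - 1) * (q - γ * (1 - q)) :=
    mul_nonneg (sub_nonneg.2 hγ) (sub_nonneg.2 hγq)
  linear_combination hfactor

end Field

theorem lus_expected_sample_size_small_gamma_general {ι : Type*} [Fintype ι] (p : ι → ℝ)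
    (hp0 : ∀ k, 0 ≤ p k) (hp1 : ∑ k, p k = 1)
    (q : ℝ) (hq : q = max (1 / 2) (⨆ k, p k))
    (γ : ℝ) (hγ : 1 ≤ γ) (hqγ : q < γ) (hγq : γ * (1 - q) ≤ q) (a : ι → ℝ)
    (ha : ∀ k, a k = if p k = q then (1 - q) / (γ - q) else 1) :
    ∑ k, a k * p k = γ * (1 - q) / (γ - q) ∧
    γ * (1 - q) / (γ - q) ≤ 1 / γ ∧
    ∑ k, a k * p k ≤ 1 / γ := by
  have hne : γ - q ≠ 0 := (sub_pos.2 hqγ).ne'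
  have hbound := mul_one_sub_div_sub_le_one_div hγ hqγ hγq
  have hsum : ∑ k, a k * p k = γ * (1 - q) / (γ - q) := by
    simp only [ha]
    rw [sum_ite_one_mul, hp1]
    rcases hγ.eq_or_lt with rfl | hγ
    · simp [div_self hne]
    · have hhalf : 1 / 2 < q := half_lt_of_mul_one_sub_le hγ hγq
      rw [sum_filter_eq_of_half_lt hp0 hp1 hq hhalf, one_sub_one_sub_div_mul hne]
  exact ⟨hsum, hbound, hsum.trans_le hbound⟩

theorem lus_expected_sample_size_small_gamma
    (K : ℕ) (hK : 2 ≤ K) (p : Fin K → ℝ)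
    (hp0 : ∀ k, 0 ≤ p k) (hp1 : ∑ k, p k = 1)
    (q : ℝ) (hq : q = max (1 / 2) (⨆ k, p k)) (hq1 : q < 1)
    (γ : ℝ) (hγ1 : 1 ≤ γ) (hγ2 : γ < 2 * q) (a : Fin K → ℝ)
    (ha : ∀ k, a k = if p k = q then (1 - q) / (γ - q) else 1) :
    ∑ k, a k * p k = γ * (1 - q) / (γ - q) ∧
    γ * (1 - q) / (γ - q) ≤ 1 / γ ∧
    ∑ k, a k * p k ≤ 1 / γ :=
  lus_expected_sample_size_small_gamma_general p hp0 hp1 q hq γ hγ1 (hq1.trans_le hγ1)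
    (mul_one_sub_le_of_le_two_mul (by linarith) hq1.le hγ2.le) a ha
end

section
/- For every m ≥ 1, the log-sum-exp function G : (Fin m → ℝ) → ℝ defined by G(f) = log(1 + Σ_{k=1}^m exp(f_k)) is strictly convex on all of ℝ^m (i.e., StrictConvexOn ℝ univ G). -/
open Finset

/-!
Translating the argument of log-sum-exp by a constant translates its value by the same constant, so
strict convexity along a segment `[x, y]` may be tested after normalizing both endpoints to
log-sum-exp `0`. It then amounts to strict convexity of `∑ i, exp (x i)`, and can fail only if the
normalized endpoints coincide, that is, if `x - y` is constant. The logit `0` of the reference class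
rules this out for `x ≠ y`.
-/

theorem strictConvexOn_sum_apply {𝕜 ι β : Type*} {E : ι → Type*} [Semiring 𝕜] [PartialOrder 𝕜]
    [Fintype ι] [∀ i, AddCommMonoid (E i)] [∀ i, Module 𝕜 (E i)] [AddCommMonoid β] [PartialOrder β]
    [IsOrderedCancelAddMonoid β] [Module 𝕜 β] {s : ∀ i, Set (E i)} {g : ∀ i, E i → β}
    (hg : ∀ i, StrictConvexOn 𝕜 (s i) (g i)) :
    StrictConvexOn 𝕜 (Set.univ.pi s) fun x ↦ ∑ i, g i (x i) := by
  refine ⟨convex_pi fun i _ ↦ (hg i).1, fun x hx y hy hxy a b ha hb hab ↦ ?_⟩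
  obtain ⟨k, hk⟩ := Function.ne_iff.1 hxy
  simp only [smul_sum, ← sum_add_distrib]
  refine sum_lt_sum (fun i _ ↦ ?_) ⟨k, mem_univ k, ?_⟩
  · exact (hg i).convexOn.2 (hx i trivial) (hy i trivial) ha.le hb.le hab
  · exact (hg k).2 (hx k trivial) (hy k trivial) hk ha hb hab

section LogSumExp

variable {ι : Type*} [Fintype ι]

/-- The log-sum-exp function on `ι → ℝ`, i.e. the log-partition function of the logits `x`.
For empty `ι` it takes the junk value `Real.log 0 = 0`. -/
noncomputable def logSumExp (x : ι → ℝ) : ℝ :=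
  Real.log (∑ i, Real.exp (x i))

theorem sum_exp_pos [Nonempty ι] (x : ι → ℝ) : 0 < ∑ i, Real.exp (x i) :=
  sum_pos (fun i _ ↦ Real.exp_pos (x i)) univ_nonempty

theorem logSumExp_mono [Nonempty ι] : Monotone (logSumExp : (ι → ℝ) → ℝ) := fun x _ hxy ↦
  Real.log_le_log (sum_exp_pos x) (sum_le_sum fun i _ ↦ Real.exp_le_exp.2 (hxy i))

theorem logSumExp_sub_const [Nonempty ι] (x : ι → ℝ) (c : ℝ) :
    logSumExp (x - Function.const ι c) = logSumExp x - c := by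
  simp only [logSumExp, Pi.sub_apply, Function.const_apply, Real.exp_sub, ← sum_div]
  rw [Real.log_div (sum_exp_pos x).ne' (Real.exp_ne_zero c), Real.log_exp]

theorem sum_exp_sub_logSumExp [Nonempty ι] (x : ι → ℝ) :
    ∑ i, Real.exp (x i - logSumExp x) = 1 := by
  simp only [Real.exp_sub, ← sum_div, logSumExp, Real.exp_log (sum_exp_pos x)]
  exact div_self (sum_exp_pos x).ne'

theorem strictConvexOn_sum_exp :
    StrictConvexOn ℝ Set.univ fun x : ι → ℝ ↦ ∑ i, Real.exp (x i) := by
  simpa only [Set.pi_univ] using strictConvexOn_sum_apply fun _ : ι ↦ strictConvexOn_exp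

theorem logSumExp_smul_add_smul_lt {x y : ι → ℝ} {i j : ι} (hij : x i - y i ≠ x j - y j) {a b : ℝ}
    (ha : 0 < a) (hb : 0 < b) (hab : a + b = 1) :
    logSumExp (a • x + b • y) < a * logSumExp x + b * logSumExp y := by
  have : Nonempty ι := ⟨i⟩
  set u := x - Function.const ι (logSumExp x) with hu
  set v := y - Function.const ι (logSumExp y) with hv
  have hu_sum : ∑ k, Real.exp (u k) = 1 := sum_exp_sub_logSumExp x
  have hv_sum : ∑ k, Real.exp (v k) = 1 := sum_exp_sub_logSumExp y
  have huv : u ≠ v := fun h ↦ hij <| by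
    have hi : x i - logSumExp x = y i - logSumExp y := congrFun h i
    have hj : x j - logSumExp x = y j - logSumExp y := congrFun h j
    linarith
  have h_sum : ∑ k, Real.exp ((a • u + b • v) k) < 1 := by
    simpa only [hu_sum, hv_sum, smul_eq_mul, mul_one, hab] using
      strictConvexOn_sum_exp.2 trivial trivial huv ha hb hab
  have h_translate : a • u + b • v =
      a • x + b • y - Function.const ι (a * logSumExp x + b * logSumExp y) := by
    ext k
    simp only [hu, hv, Pi.add_apply, Pi.sub_apply, Pi.smul_apply, Function.const_apply, smul_eq_mul]
    ring
  have h_neg : logSumExp (a • u + b • v) < 0 := Real.log_neg (sum_exp_pos _) h_sum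
  rwa [h_translate, logSumExp_sub_const, sub_neg] at h_neg

theorem strictConvexOn_logSumExp_comp [Nonempty ι] {E : Type*} [AddCommMonoid E] [Module ℝ E]
    {s : Set E} {f : ι → E → ℝ} (hf : ∀ i, ConvexOn ℝ s (f i))
    (h_sep : ∀ x ∈ s, ∀ y ∈ s, x ≠ y → ∃ i j, f i x - f i y ≠ f j x - f j y) :
    StrictConvexOn ℝ s fun x ↦ logSumExp fun i ↦ f i x := by
  refine ⟨(hf (Classical.arbitrary ι)).1, fun x hx y hy hxy a b ha hb hab ↦ ?_⟩
  obtain ⟨i, j, hij⟩ := h_sep x hx y hy hxy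
  calc
    logSumExp (fun k ↦ f k (a • x + b • y))
      ≤ logSumExp (a • (fun k ↦ f k x) + b • fun k ↦ f k y) :=
        logSumExp_mono fun k ↦ (hf k).2 hx hy ha.le hb.le hab
    _ < a * logSumExp (fun k ↦ f k x) + b * logSumExp (fun k ↦ f k y) :=
        logSumExp_smul_add_smul_lt hij ha hb hab

end LogSumExp

theorem logSumExp_strictConvexOn (m : ℕ) (hm : 1 ≤ m) :
    StrictConvexOn ℝ (Set.univ : Set (Fin m → ℝ))
      (fun f : Fin m → ℝ => Real.log (1 + ∑ k, Real.exp (f k))) := by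
  let logit (o : Option (Fin m)) (f : Fin m → ℝ) : ℝ := o.elim 0 f
  have h_convex : ∀ o, ConvexOn ℝ Set.univ (logit o)
    | none => convexOn_const 0 convex_univ
    | some k => (LinearMap.proj k : (Fin m → ℝ) →ₗ[ℝ] ℝ).convexOn convex_univ
  have h_sep : ∀ f ∈ Set.univ, ∀ g ∈ Set.univ, f ≠ g →
      ∃ o p, logit o f - logit o g ≠ logit p f - logit p g := by
    intro f _ g _ hfg
    obtain ⟨k, hk⟩ := Function.ne_iff.1 hfg
    exact ⟨some k, none, by simpa [logit, sub_eq_zero] using hk⟩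
  simpa [logSumExp, logit, Fintype.sum_option] using strictConvexOn_logSumExp_comp h_convex h_sep
end
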